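/- arXiv:2409.18559 — 4 statements merged into one kernel-verified Lean document; each statement's English description precedes it below -/
import Mathlib

section
/- For every real number y ≥ 0, |cos(√(2y)) − exp(−y)| ≤ (2/3)·y². -/
theorem aux_sin (x : ℝ) (hx : 0 ≤ x) : x - x ^ 3 / 6 ≤ Real.sin x := by
  have hd : ∀ t : ℝ, HasDerivAt (fun t : ℝ => Real.sin t - t + t ^ 3 / 6)
      (Real.cos t - 1 + t ^ 2 / 2) t := by
    intro t
    have := ((Real.hasDerivAt_sin t).sub (hasDerivAt_id t)).add
      (((hasDerivAt_id t).pow 3).div_const 6)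
    refine this.congr_deriv ?_
    simp; ring
  have hm : Monotone (fun t : ℝ => Real.sin t - t + t ^ 3 / 6) := by
    apply monotone_of_deriv_nonneg (fun t => (hd t).differentiableAt)
    intro t
    rw [(hd t).deriv]
    linarith [Real.one_sub_sq_div_two_le_cos (x := t)]
  have := hm hx
  simp at this
  linarith

theorem aux_cos (x : ℝ) (hx : 0 ≤ x) : Real.cos x ≤ 1 - x ^ 2 / 2 + x ^ 4 / 24 := by
  have hd : ∀ t : ℝ, HasDerivAt (fun t : ℝ => t ^ 4 / 24 - t ^ 2 / 2 - Real.cos t)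
      (t ^ 3 / 6 - t + Real.sin t) t := by
    intro t
    have := ((((hasDerivAt_id t).pow 4).div_const 24).sub
      (((hasDerivAt_id t).pow 2).div_const 2)).sub (Real.hasDerivAt_cos t)
    refine this.congr_deriv ?_
    simp; ring
  have hm : MonotoneOn (fun t : ℝ => t ^ 4 / 24 - t ^ 2 / 2 - Real.cos t) (Set.Ici 0) := by
    apply monotoneOn_of_deriv_nonneg (convex_Ici 0)
    · exact fun t _ => (hd t).continuousAt.continuousWithinAt
    · exact fun t _ => (hd t).differentiableAt.differentiableWithinAt
    · intro t ht
      rw [interior_Ici] at ht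
      rw [(hd t).deriv]
      linarith [aux_sin t (le_of_lt ht)]
  have := hm (Set.mem_Ici.2 le_rfl) (Set.mem_Ici.2 hx) hx
  simp at this
  linarith

/-- Pointwise bound for the alternative approximate PITE:
`|cos(√(2y)) − exp(−y)| ≤ (2/3)·y²` for `y ≥ 0`. -/
theorem stmt_1 (y : ℝ) (hy : 0 ≤ y) :
    |Real.cos (Real.sqrt (2 * y)) - Real.exp (-y)| ≤ (2 / 3) * y ^ 2 := by
  have hs : Real.sqrt (2 * y) ^ 2 = 2 * y := Real.sq_sqrt (by linarith)
  have h1 := Real.one_sub_sq_div_two_le_cos (x := Real.sqrt (2 * y))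
  have h2 := aux_cos _ (Real.sqrt_nonneg (2 * y))
  have h4 : Real.sqrt (2 * y) ^ 4 = 4 * y ^ 2 := by
    rw [show Real.sqrt (2 * y) ^ 4 = (Real.sqrt (2 * y) ^ 2) ^ 2 by ring, hs]; ring
  rw [hs] at h1 h2
  rw [h4] at h2
  have h5 := Real.add_one_le_exp (-y)
  have h6 : Real.exp (-y) ≤ 1 - y + y ^ 2 / 2 := by
    have h7 := Real.quadratic_le_exp_of_nonneg hy
    rw [Real.exp_neg]
    refine (inv_anti₀ (by positivity) h7).trans ?_
    rw [inv_le_iff_one_le_mul₀ (by positivity)]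
    nlinarith [sq_nonneg (y ^ 2)]
  rw [abs_le]
  constructor <;> nlinarith [sq_nonneg y]
end

section
/- Let n be a finite index type and let C, S be arbitrary n×n complex matrices. Let q₀ = (1+i)/√2 and q₁ = (−1+i)/√2, and let D be the 2n×2n block-diagonal matrix fromBlocks (q₀•1) 0 0 (q₁•1). Then fromBlocks C (i•S) (i•S) C = D * (fromBlocks C (−S) S C) * Dᴴ, where Dᴴ is the conjugate transpose of D. In particular, with C = cos Θ and S = sin Θ, the two PITE unitaries 𝓜(Θ) = [[cos Θ, i sin Θ],[i sin Θ, cos Θ]] and 𝓜̃(Θ) = [[cos Θ, −sin Θ],[sin Θ, cos Θ]] are conjugate by the single-qubit gate Q = (1/√2)·diag(1+i, −1+i) acting on the ancilla: 𝓜(Θ) = (Q⊗I)·𝓜̃(Θ)·(Q†⊗I). -/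
open Matrix

/-- Equivalence of the two PITE block encodings: for arbitrary blocks `C`, `S`,
with `q₀ = (1+i)/√2`, `q₁ = (−1+i)/√2` and `D = fromBlocks (q₀•1) 0 0 (q₁•1)`,
`[[C, iS],[iS, C]] = D · [[C, −S],[S, C]] · Dᴴ`. -/
theorem stmt_11 {n : Type*} [Fintype n] [DecidableEq n] (C S : Matrix n n ℂ)
    (q₀ q₁ : ℂ) (hq₀ : q₀ = (1 + Complex.I) / (Real.sqrt 2 : ℂ))
    (hq₁ : q₁ = (-1 + Complex.I) / (Real.sqrt 2 : ℂ))
    (D : Matrix (n ⊕ n) (n ⊕ n) ℂ)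
    (hD : D = Matrix.fromBlocks (q₀ • (1 : Matrix n n ℂ)) 0 0 (q₁ • (1 : Matrix n n ℂ))) :
    Matrix.fromBlocks C (Complex.I • S) (Complex.I • S) C
      = D * Matrix.fromBlocks C (-S) S C * Dᴴ := by
  have h2 : (Real.sqrt 2 : ℂ) * (Real.sqrt 2 : ℂ) = 2 := by
    rw [← Complex.ofReal_mul, Real.mul_self_sqrt (by norm_num)]; norm_num
  have c0 : star q₀ = (1 - Complex.I) / (Real.sqrt 2 : ℂ) := by
    rw [hq₀]; simp [sub_eq_add_neg]
  have c1 : star q₁ = (-1 - Complex.I) / (Real.sqrt 2 : ℂ) := by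
    rw [hq₁]; simp [sub_eq_add_neg]
  have h00 : star q₀ * q₀ = 1 := by
    rw [c0, hq₀, div_mul_div_comm, h2]; linear_combination (-1/2 : ℂ) * Complex.I_mul_I
  have h11 : star q₁ * q₁ = 1 := by
    rw [c1, hq₁, div_mul_div_comm, h2]; linear_combination (-1/2 : ℂ) * Complex.I_mul_I
  have h10 : star q₁ * q₀ = -Complex.I := by
    rw [c1, hq₀, div_mul_div_comm, h2]; linear_combination (-1/2 : ℂ) * Complex.I_mul_I
  have h01 : star q₀ * q₁ = Complex.I := by
    rw [c0, hq₁, div_mul_div_comm, h2]; linear_combination (-1/2 : ℂ) * Complex.I_mul_I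
  rw [hD, Matrix.fromBlocks_conjTranspose, Matrix.fromBlocks_multiply,
    Matrix.fromBlocks_multiply]
  simp only [Matrix.conjTranspose_smul, Matrix.conjTranspose_one, Matrix.conjTranspose_zero,
    Matrix.smul_mul, Matrix.mul_smul, Matrix.one_mul, Matrix.mul_one, Matrix.zero_mul,
    Matrix.mul_zero, add_zero, zero_add, smul_smul, h00, h11, h10, h01, one_smul,
    neg_smul, smul_neg, neg_neg]
end

section
/- Fix m₀ ∈ (0,1) and set s₀ = m₀/√(1 − m₀²) and θ₀ = arccos(m₀). Then for every real x ≥ 0, | cos(θ₀ + s₀·x) − m₀·exp(−x) | ≤ (s₀² + m₀)·x²/2. -/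
/-- Single-step error bound of the original approximate PITE of Kosugi et al.:
for `m₀ ∈ (0,1)`, `s₀ = m₀/√(1−m₀²)`, `θ₀ = arccos m₀`, and every `x ≥ 0`,
`|cos(θ₀ + s₀x) − m₀e^{−x}| ≤ (s₀² + m₀)x²/2`. -/
theorem stmt_14 (m₀ : ℝ) (hm₀ : m₀ ∈ Set.Ioo (0 : ℝ) 1)
    (s₀ θ₀ : ℝ) (hs₀ : s₀ = m₀ / Real.sqrt (1 - m₀ ^ 2)) (hθ₀ : θ₀ = Real.arccos m₀)
    (x : ℝ) (hx : 0 ≤ x) :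
    |Real.cos (θ₀ + s₀ * x) - m₀ * Real.exp (-x)| ≤ (s₀ ^ 2 + m₀) * x ^ 2 / 2 := by
  obtain ⟨h0, h1⟩ := hm₀
  have hc : Real.cos θ₀ = m₀ := by
    rw [hθ₀]; exact Real.cos_arccos (by linarith) h1.le
  have hpos : 0 < Real.sqrt (1 - m₀ ^ 2) := Real.sqrt_pos.mpr (by nlinarith)
  have hs : s₀ * Real.sin θ₀ = m₀ := by
    rw [hθ₀, Real.sin_arccos, hs₀]
    field_simp
  have hlin : ∀ y : ℝ, HasDerivAt (fun y : ℝ => θ₀ + s₀ * y) s₀ y := fun y => by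
    simpa using ((hasDerivAt_id y).const_mul s₀).const_add θ₀
  have hexp : ∀ y : ℝ, HasDerivAt (fun y : ℝ => Real.exp (-y)) (-Real.exp (-y)) y := fun y => by
    simpa using (hasDerivAt_id y).neg.exp
  let f : ℝ → ℝ := fun y => Real.cos (θ₀ + s₀ * y) - m₀ * Real.exp (-y)
  let g : ℝ → ℝ := fun y => -Real.sin (θ₀ + s₀ * y) * s₀ + m₀ * Real.exp (-y)
  let k : ℝ → ℝ := fun y => -(Real.cos (θ₀ + s₀ * y) * s₀) * s₀ - m₀ * Real.exp (-y)
  have hf : ∀ y, HasDerivAt f (g y) y := fun y => by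
    refine HasDerivAt.congr_deriv (f := _) ((hlin y).cos.sub ((hexp y).const_mul m₀)) ?_
    simp only [g]; ring
  have hg : ∀ y, HasDerivAt g (k y) y := fun y => by
    refine HasDerivAt.congr_deriv (f := _) (((hlin y).sin.neg.mul_const s₀).add ((hexp y).const_mul m₀)) ?_
    simp only [k]; ring
  have hk : ∀ y, 0 ≤ y → ‖k y‖ ≤ s₀ ^ 2 + m₀ := fun y hy => by
    have e1 : Real.exp (-y) ≤ 1 := Real.exp_le_one_iff.mpr (by linarith)
    have e2 := Real.exp_pos (-y)
    have c1 := Real.cos_le_one (θ₀ + s₀ * y)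
    have c2 := Real.neg_one_le_cos (θ₀ + s₀ * y)
    have q := sq_nonneg s₀
    rw [Real.norm_eq_abs, abs_le]
    simp only [k]
    constructor <;> nlinarith
  have hgb : ∀ y, 0 ≤ y → ‖g y‖ ≤ (s₀ ^ 2 + m₀) * y := fun y hy =>
    image_norm_le_of_norm_deriv_right_le_deriv_boundary (a := 0) (b := y)
      (B := fun y => (s₀ ^ 2 + m₀) * y) (B' := fun _ => s₀ ^ 2 + m₀)
      (fun z _ => (hg z).continuousAt.continuousWithinAt)
      (fun z _ => (hg z).hasDerivWithinAt)
      (by simp only [g]; simp; linarith)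
      (fun z => by simpa using (hasDerivAt_id z).const_mul (s₀ ^ 2 + m₀))
      (fun z hz => hk z hz.1) ⟨hy, le_rfl⟩
  exact image_norm_le_of_norm_deriv_right_le_deriv_boundary (a := 0) (b := x) (f := f)
      (B := fun y => (s₀ ^ 2 + m₀) * y ^ 2 / 2) (B' := fun y => (s₀ ^ 2 + m₀) * y)
      (fun z _ => (hf z).continuousAt.continuousWithinAt)
      (fun z _ => (hf z).hasDerivWithinAt)
      (by simp [f, hc])
      (fun z => by
        refine HasDerivAt.congr_deriv (f := _) (((hasDerivAt_pow 2 z).const_mul (s₀ ^ 2 + m₀)).div_const 2) ?_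
        simp; ring)
      (fun z hz => hgb z hz.1) ⟨hx, le_rfl⟩
end

section
/- There exist constants C > 0 and η > 0 such that for all y ∈ [0, η], | cos( √(2y) − (√2/6)·y^{3/2} ) − exp(−y) | ≤ C·y³. -/
theorem cos_bound_six {x : ℝ} (hx : |x| ≤ 1) :
    |Real.cos x - (1 - x ^ 2 / 2 + x ^ 4 / 24)| ≤ |x| ^ 6 := by
  have hn : ‖(x : ℂ) * Complex.I‖ = |x| := by simp
  have h := Complex.exp_bound (x := (x : ℂ) * Complex.I) (by rw [hn]; exact hx) (n := 6) (by norm_num)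
  rw [hn] at h
  have h2 := (Complex.abs_re_le_norm _).trans h
  have e : (Complex.exp ((x : ℂ) * Complex.I)
      - ∑ m ∈ Finset.range 6, ((x : ℂ) * Complex.I) ^ m / (m.factorial : ℂ)).re
      = Real.cos x - (1 - x ^ 2 / 2 + x ^ 4 / 24) := by
    have hs : ∑ m ∈ Finset.range 6, ((x : ℂ) * Complex.I) ^ m / (m.factorial : ℂ)
        = ((1 - x ^ 2 / 2 + x ^ 4 / 24 : ℝ) : ℂ)
          + ((x - x ^ 3 / 6 + x ^ 5 / 120 : ℝ) : ℂ) * Complex.I := by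
      have h3 : Complex.I ^ 3 = - Complex.I := Complex.I_pow_three
      have h4 : Complex.I ^ 4 = 1 := Complex.I_pow_four
      have h5 : Complex.I ^ 5 = Complex.I := by rw [pow_succ, h4, one_mul]
      simp only [Finset.sum_range_succ, Finset.sum_range_zero, mul_pow, h3, h4, h5,
        Complex.I_sq, Nat.factorial]
      push_cast
      ring
    rw [hs, Complex.sub_re, Complex.exp_ofReal_mul_I_re, Complex.add_re, Complex.ofReal_re,
      Complex.re_ofReal_mul, Complex.I_re]
    ring
  rw [e] at h2
  refine h2.trans ?_
  have : (0 : ℝ) ≤ |x| ^ 6 := by positivity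
  norm_num [Nat.factorial]
  linarith

/-- Scalar form of the second-order alternative approximate PITE: there are `C > 0`
and `η > 0` with `|cos(√(2y) − (√2/6)y^{3/2}) − e^{−y}| ≤ C·y³` for all `y ∈ [0, η]`. -/
theorem stmt_18 :
    ∃ C > (0 : ℝ), ∃ η > (0 : ℝ), ∀ y ∈ Set.Icc (0 : ℝ) η,
      |Real.cos (Real.sqrt (2 * y) - (Real.sqrt 2 / 6) * y ^ ((3 : ℝ) / 2))
          - Real.exp (-y)| ≤ C * y ^ 3 := by
  refine ⟨10, by norm_num, 1 / 2, by norm_num, ?_⟩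
  rintro y ⟨h0, h1⟩
  have hp : y ^ ((3 : ℝ) / 2) = y * Real.sqrt y := by
    rw [show (3 : ℝ) / 2 = 1 + 1 / 2 by norm_num,
      Real.rpow_add_of_nonneg h0 (by norm_num) (by norm_num), Real.rpow_one, Real.sqrt_eq_rpow]
  have hs : Real.sqrt (2 * y) = Real.sqrt 2 * Real.sqrt y := Real.sqrt_mul (by norm_num) y
  set t := Real.sqrt (2 * y) - (Real.sqrt 2 / 6) * y ^ ((3 : ℝ) / 2) with ht
  have ht2 : t ^ 2 = 2 * y * (1 - y / 6) ^ 2 := by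
    have a := Real.sq_sqrt (show (0 : ℝ) ≤ 2 by norm_num)
    have b := Real.sq_sqrt h0
    rw [ht, hp, hs]
    calc _ = Real.sqrt 2 ^ 2 * Real.sqrt y ^ 2 * (1 - y / 6) ^ 2 := by ring
      _ = _ := by rw [a, b]
  have hq : (1 - y / 6) ^ 2 ≤ 1 := by nlinarith
  have hT : t ^ 2 ≤ 2 * y := by rw [ht2]; nlinarith
  have hc := cos_bound_six (x := t) (abs_le_one_iff_mul_self_le_one.2 (by nlinarith))
  have h6 : |t| ^ 6 ≤ 8 * y ^ 3 := by
    calc |t| ^ 6 = (t ^ 2) ^ 3 := by rw [← sq_abs t]; ring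
      _ ≤ (2 * y) ^ 3 := by gcongr
      _ = _ := by ring
  have he := Real.exp_bound (x := -y) (by rw [abs_neg, abs_of_nonneg h0]; linarith) (n := 3)
    (by norm_num)
  rw [abs_neg, abs_of_nonneg h0] at he
  norm_num [Finset.sum_range_succ, Nat.factorial] at he
  have h4 : t ^ 4 = 4 * y ^ 2 * ((1 - y / 6) ^ 2) ^ 2 := by
    rw [show t ^ 4 = (t ^ 2) ^ 2 by ring, ht2]; ring
  rw [ht2, h4] at hc
  have hy3 : 0 ≤ y ^ 3 := by positivity
  have key : |(1 - 2 * y * (1 - y / 6) ^ 2 / 2 + 4 * y ^ 2 * ((1 - y / 6) ^ 2) ^ 2 / 24)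
      - (1 - y + y ^ 2 / 2)| ≤ y ^ 3 := by
    have : (1 - 2 * y * (1 - y / 6) ^ 2 / 2 + 4 * y ^ 2 * ((1 - y / 6) ^ 2) ^ 2 / 24)
      - (1 - y + y ^ 2 / 2)
      = y ^ 3 * (-(1 / 36) + (-(4 / 6) + y / 6 - y ^ 2 / 54 + y ^ 3 / 1296) / 6) := by ring
    rw [this, abs_mul, abs_of_nonneg hy3]
    have : y ^ 2 ≤ 1 := by nlinarith
    have : y ^ 3 ≤ 1 := pow_le_one₀ h0 (by linarith)
    have : 0 ≤ y ^ 2 := by positivity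
    refine mul_le_of_le_one_right hy3 (abs_le.2 ⟨?_, ?_⟩) <;> linarith
  rw [abs_le] at *
  constructor <;> linarith [hc.1, hc.2, he.1, he.2, key.1, key.2]
end
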